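/- The function μ is nondecreasing: for all 0 < s₁ ≤ s₂ one has −g·k ≤ μ(s₁) ≤ μ(s₂). -/

import Mathlib

open Set MeasureTheory intervalIntegral Filter Topology

noncomputable section

namespace RT

/-- The piecewise integral `∫_{-m}^0 + ∫_0^ℓ`. -/
def pwInt (m l : ℝ) (f : ℝ → ℝ) : ℝ :=
  (∫ x in (-m)..(0:ℝ), f x) + ∫ x in (0:ℝ)..l, f x

/-- `f` restricted to `[-m,0)` extends continuously to `[-m,0]`, and `f` restricted to
`(0,ℓ]` extends continuously to `[0,ℓ]`. -/
def PiecewiseCont (m l : ℝ) (f : ℝ → ℝ) : Prop :=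
  (∃ F : ℝ → ℝ, ContinuousOn F (Icc (-m) 0) ∧ EqOn f F (Ico (-m) 0)) ∧
  (∃ F : ℝ → ℝ, ContinuousOn F (Icc 0 l) ∧ EqOn f F (Ioc 0 l))

/-- A profile function: the restriction to `[-m,0)` extends continuously to `[-m,0]`, and
the function is continuous on `[0,ℓ]` (hence right-continuous at `0`). -/
def Profile (m l : ℝ) (f : ℝ → ℝ) : Prop :=
  (∃ F : ℝ → ℝ, ContinuousOn F (Icc (-m) 0) ∧ EqOn f F (Ico (-m) 0)) ∧
  ContinuousOn f (Icc 0 l)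

/-- The four steady-state profiles `ρ0, p, ε0, δ0` with their positivity assumptions. -/
def ProfilesHyp (m l : ℝ) (ρ0 p ε0 δ0 : ℝ → ℝ) : Prop :=
  Profile m l ρ0 ∧ Profile m l p ∧ Profile m l ε0 ∧ Profile m l δ0 ∧
  (∀ x ∈ Icc (-m) l, 0 < ρ0 x) ∧ (∀ x ∈ Icc (-m) l, 0 < p x) ∧
  (∀ x ∈ Icc (-m) l, 0 < ε0 x) ∧ (∀ x ∈ Icc (-m) l, 0 ≤ δ0 x)

/-- `f` is continuous on `[-m,ℓ]` and continuously differentiable on `[-m,0]` and on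
`[0,ℓ]`, with piecewise derivative `fd`. -/
def PiecewiseC1 (m l : ℝ) (f fd : ℝ → ℝ) : Prop :=
  ContinuousOn f (Icc (-m) l) ∧
  (∀ x ∈ Ico (-m) 0, HasDerivWithinAt f (fd x) (Icc (-m) 0) x) ∧
  (∀ x ∈ Ioc 0 l, HasDerivWithinAt f (fd x) (Icc 0 l) x) ∧
  PiecewiseCont m l fd

/-- An admissible pair `(φ,ψ)` with piecewise derivatives `(φd,ψd)`. -/
def Admissible (m l : ℝ) (φ ψ φd ψd : ℝ → ℝ) : Prop :=
  PiecewiseC1 m l φ φd ∧ PiecewiseC1 m l ψ ψd ∧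
  φ (-m) = 0 ∧ φ l = 0 ∧ ψ (-m) = 0 ∧ ψ l = 0

/-- The energy `E(φ,ψ;s)`. -/
def energyE (m l g σ k : ℝ) (ρ0 p ε0 δ0 : ℝ → ℝ) (φ ψ φd ψd : ℝ → ℝ) (s : ℝ) : ℝ :=
  σ * k ^ 2 / 2 * (ψ 0) ^ 2
  + (1 / 2) * pwInt m l (fun x =>
      (s * δ0 x + p x * ρ0 x) * (ψd x + k * φ x) ^ 2 - 2 * g * ρ0 x * k * φ x * ψ x)
  + (s / 2) * pwInt m l (fun x =>
      ε0 x * ((φd x - k * ψ x) ^ 2 + (ψd x - k * φ x) ^ 2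
        + (1 / 3) * (ψd x + k * φ x) ^ 2))

/-- The normalization functional `J(φ,ψ)`. -/
def energyJ (m l : ℝ) (ρ0 : ℝ → ℝ) (φ ψ : ℝ → ℝ) : ℝ :=
  (1 / 2) * pwInt m l (fun x => ρ0 x * ((φ x) ^ 2 + (ψ x) ^ 2))

/-- The viscous part `E1(φ,ψ)` of the energy. -/
def energyE1 (m l k : ℝ) (ε0 δ0 : ℝ → ℝ) (φ ψ φd ψd : ℝ → ℝ) : ℝ :=
  (1 / 2) * pwInt m l (fun x => (δ0 x + ε0 x / 3) * (ψd x + k * φ x) ^ 2)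
  + (1 / 2) * pwInt m l (fun x =>
      ε0 x * ((φd x - k * ψ x) ^ 2 + (ψd x - k * φ x) ^ 2))

/-- `μ(s)`: the infimum of `E(·,·;s)` over admissible pairs with `J = 1`. -/
def muInf (m l g σ k : ℝ) (ρ0 p ε0 δ0 : ℝ → ℝ) (s : ℝ) : ℝ :=
  sInf { e : ℝ | ∃ φ ψ φd ψd : ℝ → ℝ, Admissible m l φ ψ φd ψd ∧
    energyJ m l ρ0 φ ψ = 1 ∧ e = energyE m l g σ k ρ0 p ε0 δ0 φ ψ φd ψd s }

/-- The hydrostatic steady-state relation `ρ0' = -g ρ0 / p` on each piece. -/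
def Hydrostatic (m l g : ℝ) (ρ0 p : ℝ → ℝ) : Prop :=
  (∀ x ∈ Ico (-m) 0, HasDerivWithinAt ρ0 (-g * ρ0 x / p x) (Ico (-m) 0) x) ∧
  (∀ x ∈ Ioc 0 l, HasDerivWithinAt ρ0 (-g * ρ0 x / p x) (Ioc 0 l) x)

end RT

namespace RT

theorem PiecewiseCont.add {m l : ℝ} {f g : ℝ → ℝ} (hf : PiecewiseCont m l f)
    (hg : PiecewiseCont m l g) : PiecewiseCont m l (fun x => f x + g x) := by
  obtain ⟨⟨F, hF, eF⟩, ⟨F', hF', eF'⟩⟩ := hf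
  obtain ⟨⟨G, hG, eG⟩, ⟨G', hG', eG'⟩⟩ := hg
  exact ⟨⟨fun x => F x + G x, hF.add hG, fun x hx => by simp only [eF hx, eG hx]⟩,
    ⟨fun x => F' x + G' x, hF'.add hG', fun x hx => by simp only [eF' hx, eG' hx]⟩⟩

theorem PiecewiseCont.sub {m l : ℝ} {f g : ℝ → ℝ} (hf : PiecewiseCont m l f)
    (hg : PiecewiseCont m l g) : PiecewiseCont m l (fun x => f x - g x) := by
  obtain ⟨⟨F, hF, eF⟩, ⟨F', hF', eF'⟩⟩ := hf
  obtain ⟨⟨G, hG, eG⟩, ⟨G', hG', eG'⟩⟩ := hg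
  exact ⟨⟨fun x => F x - G x, hF.sub hG, fun x hx => by simp only [eF hx, eG hx]⟩,
    ⟨fun x => F' x - G' x, hF'.sub hG', fun x hx => by simp only [eF' hx, eG' hx]⟩⟩

theorem PiecewiseCont.mul {m l : ℝ} {f g : ℝ → ℝ} (hf : PiecewiseCont m l f)
    (hg : PiecewiseCont m l g) : PiecewiseCont m l (fun x => f x * g x) := by
  obtain ⟨⟨F, hF, eF⟩, ⟨F', hF', eF'⟩⟩ := hf
  obtain ⟨⟨G, hG, eG⟩, ⟨G', hG', eG'⟩⟩ := hg
  exact ⟨⟨fun x => F x * G x, hF.mul hG, fun x hx => by simp only [eF hx, eG hx]⟩,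
    ⟨fun x => F' x * G' x, hF'.mul hG', fun x hx => by simp only [eF' hx, eG' hx]⟩⟩

theorem PiecewiseCont.sq {m l : ℝ} {f : ℝ → ℝ} (hf : PiecewiseCont m l f) :
    PiecewiseCont m l (fun x => f x ^ 2) := by
  simpa only [pow_two] using hf.mul hf

theorem PiecewiseCont.const (m l c : ℝ) : PiecewiseCont m l (fun _ => c) :=
  ⟨⟨fun _ => c, continuousOn_const, fun _ _ => rfl⟩,
    ⟨fun _ => c, continuousOn_const, fun _ _ => rfl⟩⟩

theorem Profile.pc {m l : ℝ} {f : ℝ → ℝ} (hf : Profile m l f) : PiecewiseCont m l f :=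
  ⟨hf.1, ⟨f, hf.2, fun _ _ => rfl⟩⟩

theorem PiecewiseC1.pc {m l : ℝ} (hm : 0 < m) (hl : 0 < l) {f fd : ℝ → ℝ}
    (hf : PiecewiseC1 m l f fd) : PiecewiseCont m l f :=
  ⟨⟨f, hf.1.mono (Icc_subset_Icc le_rfl hl.le), fun _ _ => rfl⟩,
    ⟨f, hf.1.mono (Icc_subset_Icc (by linarith) le_rfl), fun _ _ => rfl⟩⟩

theorem PiecewiseCont.int {m l : ℝ} (hm : 0 < m) (hl : 0 < l) {f : ℝ → ℝ}
    (hf : PiecewiseCont m l f) :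
    IntervalIntegrable f volume (-m) 0 ∧ IntervalIntegrable f volume 0 l := by
  obtain ⟨⟨F, hF, eF⟩, ⟨F', hF', eF'⟩⟩ := hf
  constructor
  · rw [intervalIntegrable_iff_integrableOn_Ioo_of_le (by linarith)]
    exact ((hF.integrableOn_Icc).mono_set Ioo_subset_Icc_self).congr_fun
      (fun x hx => (eF ⟨hx.1.le, hx.2⟩).symm) measurableSet_Ioo
  · rw [intervalIntegrable_iff_integrableOn_Ioo_of_le hl.le]
    exact ((hF'.integrableOn_Icc).mono_set Ioo_subset_Icc_self).congr_fun
      (fun x hx => (eF' ⟨hx.1, hx.2.le⟩).symm) measurableSet_Ioo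

theorem pwInt_mono {m l : ℝ} (hm : 0 < m) (hl : 0 < l) {f g : ℝ → ℝ}
    (hf : PiecewiseCont m l f) (hg : PiecewiseCont m l g)
    (h : ∀ x ∈ Icc (-m) l, f x ≤ g x) : pwInt m l f ≤ pwInt m l g := by
  have i1 := hf.int hm hl
  have i2 := hg.int hm hl
  unfold pwInt
  apply add_le_add
  · exact intervalIntegral.integral_mono_on (by linarith) i1.1 i2.1
      (fun x hx => h x ⟨hx.1, hx.2.trans hl.le⟩)
  · exact intervalIntegral.integral_mono_on hl.le i1.2 i2.2
      (fun x hx => h x ⟨by linarith [hx.1], hx.2⟩)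

theorem pwInt_const_mul (m l c : ℝ) (f : ℝ → ℝ) :
    pwInt m l (fun x => c * f x) = c * pwInt m l f := by
  simp only [pwInt, intervalIntegral.integral_const_mul]; ring

theorem energy_bounds (m l g σ k : ℝ) (ρ0 p ε0 δ0 : ℝ → ℝ)
    (hm : 0 < m) (hl : 0 < l) (hg : 0 < g) (hσ : 0 ≤ σ) (hk : 0 < k)
    (hprof : ProfilesHyp m l ρ0 p ε0 δ0) (φ ψ φd ψd : ℝ → ℝ)
    (ha : Admissible m l φ ψ φd ψd) (hJ : energyJ m l ρ0 φ ψ = 1)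
    (s₁ s₂ : ℝ) (hs : 0 < s₁) (hss : s₁ ≤ s₂) :
    -g * k ≤ energyE m l g σ k ρ0 p ε0 δ0 φ ψ φd ψd s₁ ∧
    energyE m l g σ k ρ0 p ε0 δ0 φ ψ φd ψd s₁ ≤
      energyE m l g σ k ρ0 p ε0 δ0 φ ψ φd ψd s₂ := by
  obtain ⟨hρ, hp, hε, hδ, pρ, pp, pε, pδ⟩ := hprof
  obtain ⟨h1, h2, -, -, -, -⟩ := ha
  have cρ := hρ.pc
  have cp := hp.pc
  have cε := hε.pc
  have cδ := hδ.pc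
  have cφ := h1.pc hm hl
  have cψ := h2.pc hm hl
  have cφd := h1.2.2.2
  have cψd := h2.2.2.2
  have C := PiecewiseCont.const m l
  have cA : ∀ s : ℝ, PiecewiseCont m l (fun x =>
      (s * δ0 x + p x * ρ0 x) * (ψd x + k * φ x) ^ 2 - 2 * g * ρ0 x * k * φ x * ψ x) :=
    fun s => ((((C s).mul cδ).add (cp.mul cρ)).mul ((cψd.add ((C k).mul cφ)).sq)).sub
      (((((C (2 * g)).mul cρ).mul (C k)).mul cφ).mul cψ)
  have cB : PiecewiseCont m l (fun x =>
      ε0 x * ((φd x - k * ψ x) ^ 2 + (ψd x - k * φ x) ^ 2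
        + (1 / 3) * (ψd x + k * φ x) ^ 2)) :=
    cε.mul ((((cφd.sub ((C k).mul cψ)).sq).add ((cψd.sub ((C k).mul cφ)).sq)).add
      ((C (1 / 3)).mul ((cψd.add ((C k).mul cφ)).sq)))
  have cJ : PiecewiseCont m l (fun x => (-g * k) * (ρ0 x * ((φ x) ^ 2 + (ψ x) ^ 2))) :=
    (C (-g * k)).mul (cρ.mul (cφ.sq.add cψ.sq))
  have hA : pwInt m l (fun x => (-g * k) * (ρ0 x * ((φ x) ^ 2 + (ψ x) ^ 2))) ≤ _ :=
    pwInt_mono hm hl cJ (cA s₁) (fun x hx => by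
      have a1 : 0 ≤ (s₁ * δ0 x + p x * ρ0 x) * (ψd x + k * φ x) ^ 2 :=
        mul_nonneg (add_nonneg (mul_nonneg hs.le (pδ x hx))
          (mul_pos (pp x hx) (pρ x hx)).le) (sq_nonneg _)
      have a2 : 0 ≤ (g * k * ρ0 x) * (φ x - ψ x) ^ 2 :=
        mul_nonneg (mul_pos (mul_pos hg hk) (pρ x hx)).le (sq_nonneg _)
      linarith)
  have hAA := pwInt_mono hm hl (cA s₁) (cA s₂) (fun x hx => by
    have a1 : 0 ≤ (s₂ - s₁) * δ0 x * (ψd x + k * φ x) ^ 2 :=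
      mul_nonneg (mul_nonneg (by linarith) (pδ x hx)) (sq_nonneg _)
    linarith)
  have hB := pwInt_mono hm hl (C 0) cB (fun x hx => by
    have := (pε x hx).le
    positivity)
  have h0 : pwInt m l (fun _ => (0 : ℝ)) = 0 := by simp [pwInt]
  rw [h0] at hB
  rw [pwInt_const_mul] at hA
  unfold energyJ at hJ
  have hJ' : pwInt m l (fun x => ρ0 x * ((φ x) ^ 2 + (ψ x) ^ 2)) = 2 := by linarith
  rw [hJ'] at hA
  have hS : 0 ≤ σ * k ^ 2 / 2 * (ψ 0) ^ 2 := by positivity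
  have hB1 := mul_nonneg (half_pos hs).le hB
  have hB2 := mul_le_mul_of_nonneg_right (div_le_div_of_nonneg_right hss zero_le_two) hB
  unfold energyE
  constructor <;> linarith

/-- The function `μ` is nondecreasing and bounded below by `-g k`:
for `0 < s₁ ≤ s₂`, `-g k ≤ μ(s₁) ≤ μ(s₂)`. -/
theorem muInf_monotone (m l g σ k : ℝ) (ρ0 p ε0 δ0 : ℝ → ℝ)
    (hm : 0 < m) (hl : 0 < l) (hg : 0 < g) (hσ : 0 ≤ σ) (hk : 0 < k)
    (hprof : ProfilesHyp m l ρ0 p ε0 δ0) :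
    ∀ s₁ s₂ : ℝ, 0 < s₁ → s₁ ≤ s₂ →
      -g * k ≤ muInf m l g σ k ρ0 p ε0 δ0 s₁ ∧
      muInf m l g σ k ρ0 p ε0 δ0 s₁ ≤ muInf m l g σ k ρ0 p ε0 δ0 s₂ := by
  intro s₁ s₂ hs hss
  have key := energy_bounds m l g σ k ρ0 p ε0 δ0 hm hl hg hσ hk hprof
  unfold muInf
  constructor
  · apply Real.le_sInf
    · rintro e ⟨φ, ψ, φd, ψd, ha, hJ, rfl⟩
      exact (key φ ψ φd ψd ha hJ s₁ s₁ hs le_rfl).1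
    · have := mul_pos hg hk
      linarith
  · by_cases hne : ∃ φ ψ φd ψd : ℝ → ℝ, Admissible m l φ ψ φd ψd ∧ energyJ m l ρ0 φ ψ = 1
    · obtain ⟨φ, ψ, φd, ψd, ha, hJ⟩ := hne
      refine le_csInf ⟨_, φ, ψ, φd, ψd, ha, hJ, rfl⟩ ?_
      rintro e ⟨φ, ψ, φd, ψd, ha, hJ, rfl⟩
      refine le_trans (csInf_le ⟨-g * k, ?_⟩ ⟨φ, ψ, φd, ψd, ha, hJ, rfl⟩)
        (key φ ψ φd ψd ha hJ s₁ s₂ hs hss).2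
      rintro e ⟨φ, ψ, φd, ψd, ha, hJ, rfl⟩
      exact (key φ ψ φd ψd ha hJ s₁ s₁ hs le_rfl).1
    · have hE : ∀ s : ℝ, { e : ℝ | ∃ φ ψ φd ψd : ℝ → ℝ, Admissible m l φ ψ φd ψd ∧
          energyJ m l ρ0 φ ψ = 1 ∧
          e = energyE m l g σ k ρ0 p ε0 δ0 φ ψ φd ψd s } = ∅ := by
        intro s
        rw [Set.eq_empty_iff_forall_notMem]
        rintro e ⟨φ, ψ, φd, ψd, ha, hJ, -⟩
        exact hne ⟨φ, ψ, φd, ψd, ha, hJ⟩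
      rw [hE, hE]

end RT
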